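/- arXiv:1408.3699 — 5 statements merged into one kernel-verified Lean document; each statement's English description precedes it below -/
import Mathlib

section
/- Let S be a semigroup with identity acting on a compact Hausdorff space X from the left (so that x ↦ s·x is continuous for each s ∈ S). Then the following are equivalent: (i) there exists a left S-invariant Radon probability measure on X; (ii) for every n ≥ 1, all elements s_1, …, s_n of S and all functions f_1, …, f_n ∈ C(X), one has ‖1 − Σ_{i=1}^n (f_i·s_i − f_i)‖_∞ ≥ 1, where 1 denotes the constant function 1 and ‖·‖_∞ the supremum norm on C(X). -/
open BoundedContinuousFunction MeasureTheory Filter Topology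

noncomputable section

/-!
An invariant probability measure is the same thing as a norm-one functional on `C(X, ℝ)` that sends
`1` to `1` and kills every coboundary `f · s - f`: such a functional is automatically positive, so
Riesz–Markov–Kakutani turns it into a measure. By Hahn–Banach on the quotient of `C(X, ℝ)` by the
span of the coboundaries, it exists exactly when `1` has distance at least `1` from that span.
-/

theorem mem_iSup_range_iff_exists_sum {R E F ι : Type*} [Semiring R] [AddCommMonoid E]
    [AddCommMonoid F] [Module R E] [Module R F] [Nonempty ι] (D : ι → E →ₗ[R] F) {v : F} :
    v ∈ ⨆ i, LinearMap.range (D i) ↔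
      ∃ n : ℕ, 1 ≤ n ∧ ∃ (s : Fin n → ι) (f : Fin n → E), v = ∑ i, D (s i) (f i) := by
  constructor
  · intro hv
    induction hv using Submodule.iSup_induction' with
    | mem i _ hw =>
      obtain ⟨f, rfl⟩ := hw
      exact ⟨1, le_rfl, fun _ ↦ i, fun _ ↦ f, by simp⟩
    | zero =>
      obtain ⟨i⟩ := ‹Nonempty ι›
      exact ⟨1, le_rfl, fun _ ↦ i, 0, by simp⟩
    | add _ _ _ _ hv hw =>
      obtain ⟨n, hn, s, f, rfl⟩ := hv
      obtain ⟨m, -, t, g, rfl⟩ := hw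
      exact ⟨n + m, by lia, Fin.append s t, Fin.append f g, by simp [Fin.sum_univ_add]⟩
  · rintro ⟨n, -, s, f, rfl⟩
    exact Submodule.sum_mem _ fun i _ ↦
      Submodule.mem_iSup_of_mem (s i) (LinearMap.mem_range_self _ _)

section Dual

variable {𝕜 E : Type*} [RCLike 𝕜] [SeminormedAddCommGroup E] [NormedSpace 𝕜 E]

theorem exists_dual_eq_norm_mkQ (V : Submodule 𝕜 E) (x : E) :
    ∃ L : StrongDual 𝕜 E, ‖L‖ ≤ 1 ∧ L x = ‖V.mkQ x‖ ∧ ∀ v ∈ V, L v = 0 := by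
  obtain ⟨g, hg_norm, hg_eq⟩ := exists_dual_vector'' 𝕜 (V.mkQ x)
  refine ⟨g ∘L V.mkQL, ?_, hg_eq, fun v hv ↦ ?_⟩
  · refine ContinuousLinearMap.opNorm_le_bound _ zero_le_one fun y ↦ ?_
    exact g.le_of_opNorm_le_of_le hg_norm (Submodule.Quotient.norm_mk_le V y)
  · simp [(Submodule.Quotient.mk_eq_zero V).2 hv]

theorem exists_dual_eq_one_iff_forall_one_le_norm_sub (V : Submodule 𝕜 E) (x : E) :
    (∃ L : StrongDual 𝕜 E, ‖L‖ ≤ 1 ∧ L x = 1 ∧ ∀ v ∈ V, L v = 0) ↔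
      ∀ v ∈ V, 1 ≤ ‖x - v‖ := by
  constructor
  · rintro ⟨L, hL_norm, hLx, hLV⟩ v hv
    calc
      1 = ‖L (x - v)‖ := by simp [hLx, hLV v hv]
      _ ≤ 1 * ‖x - v‖ := L.le_of_opNorm_le hL_norm _
      _ = ‖x - v‖ := one_mul _
  · intro h
    have one_le_norm_mkQ : 1 ≤ ‖V.mkQ x‖ := by
      refine QuotientAddGroup.le_norm_iff.2 fun y hy ↦ ?_
      simpa using h (x - y) ((Submodule.Quotient.eq V).1 hy.symm)
    obtain ⟨L, hL_norm, hLx, hLV⟩ := exists_dual_eq_norm_mkQ V x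
    refine ⟨(‖V.mkQ x‖⁻¹ : 𝕜) • L, ?_, ?_, fun v hv ↦ by simp [hLV v hv]⟩
    · rw [norm_smul, norm_inv, RCLike.norm_ofReal, abs_norm]
      exact mul_le_one₀ (inv_le_one_of_one_le₀ one_le_norm_mkQ) (norm_nonneg _) hL_norm
    · have norm_mkQ_ne_zero : (‖V.mkQ x‖ : 𝕜) ≠ 0 := by
        exact_mod_cast (one_pos.trans_le one_le_norm_mkQ).ne'
      rw [_root_.smul_apply, hLx, smul_eq_mul, inv_mul_cancel₀ norm_mkQ_ne_zero]

end Dual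

section ContinuousFunctions

variable {X : Type*} [TopologicalSpace X] [CompactSpace X]

theorem norm_norm_smul_one_sub_le_of_nonneg {f : C(X, ℝ)} (hf : 0 ≤ f) :
    ‖‖f‖ • (1 : C(X, ℝ)) - f‖ ≤ ‖f‖ := by
  refine (ContinuousMap.norm_le _ (norm_nonneg f)).2 fun x ↦ ?_
  have apply_nonneg : 0 ≤ f x := hf x
  have apply_le : f x ≤ ‖f‖ := f.apply_le_norm x
  simp only [ContinuousMap.sub_apply, ContinuousMap.smul_apply, ContinuousMap.one_apply,
    smul_eq_mul, mul_one, Real.norm_eq_abs, abs_le]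
  constructor <;> linarith

theorem dual_apply_nonneg_of_norm_le_apply_one {L : StrongDual ℝ C(X, ℝ)} (hL : ‖L‖ ≤ L 1)
    {f : C(X, ℝ)} (hf : 0 ≤ f) : 0 ≤ L f := by
  suffices ‖f‖ * L 1 - L f ≤ ‖f‖ * L 1 by linarith
  calc
    ‖f‖ * L 1 - L f = L (‖f‖ • 1 - f) := by simp
    _ ≤ ‖L (‖f‖ • 1 - f)‖ := Real.le_norm_self _
    _ ≤ L 1 * ‖f‖ := L.le_of_opNorm_le_of_le hL (norm_norm_smul_one_sub_le_of_nonneg hf)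
    _ = ‖f‖ * L 1 := mul_comm _ _

variable [MeasurableSpace X]

section Integral

variable [OpensMeasurableSpace X] (μ : Measure X) [IsFiniteMeasure μ]

theorem integrable_continuousMap (f : C(X, ℝ)) : Integrable f μ :=
  (BoundedContinuousFunction.mkOfCompact f).integrable μ

/-- Integration against a finite measure, as an element of the dual of `C(X, ℝ)`. -/
def integralDual : StrongDual ℝ C(X, ℝ) :=
  LinearMap.mkContinuous
    { toFun := fun f ↦ ∫ x, f x ∂μ
      map_add' := fun f g ↦
        integral_add (integrable_continuousMap μ f) (integrable_continuousMap μ g)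
      map_smul' := fun c f ↦ integral_smul c f }
    (μ.real Set.univ)
    fun f ↦ (norm_integral_le_of_norm_le_const (.of_forall f.norm_coe_le_norm)).trans_eq
      (mul_comm _ _)

@[simp]
theorem integralDual_apply (f : C(X, ℝ)) : integralDual μ f = ∫ x, f x ∂μ := rfl

theorem norm_integralDual_le : ‖integralDual μ‖ ≤ μ.real Set.univ :=
  LinearMap.mkContinuous_norm_le _ measureReal_nonneg _

end Integral

variable [T2Space X] [BorelSpace X]

theorem exists_regular_integral_eq (L : C(X, ℝ) →ₚ[ℝ] ℝ) :
    ∃ μ : Measure X, μ.Regular ∧ ∀ f : C(X, ℝ), ∫ x, f x ∂μ = L f := by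
  let Λ : CompactlySupportedContinuousMap X ℝ →ₚ[ℝ] ℝ :=
    { toFun := fun f ↦ L f.toContinuousMap
      map_add' := fun f g ↦ map_add L f.toContinuousMap g.toContinuousMap
      map_smul' := fun c f ↦ map_smul L c f.toContinuousMap
      monotone' := fun _ _ hfg ↦ L.monotone' hfg }
  exact ⟨RealRMK.rieszMeasure Λ, inferInstance, fun f ↦
    RealRMK.integral_rieszMeasure Λ (CompactlySupportedContinuousMap.continuousMapEquiv f)⟩

theorem exists_isProbabilityMeasure_regular_integral_eq {L : StrongDual ℝ C(X, ℝ)}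
    (hL_norm : ‖L‖ ≤ 1) (hL_one : L 1 = 1) :
    ∃ μ : Measure X, IsProbabilityMeasure μ ∧ μ.Regular ∧ ∀ f : C(X, ℝ), ∫ x, f x ∂μ = L f := by
  obtain ⟨μ, hμ_regular, hμL⟩ := exists_regular_integral_eq <|
    PositiveLinearMap.mk₀ (L : C(X, ℝ) →ₗ[ℝ] ℝ) fun _ hf ↦
      dual_apply_nonneg_of_norm_le_apply_one (hL_norm.trans_eq hL_one.symm) hf
  have measureReal_univ : μ.real Set.univ = 1 := by
    simpa using (hμL 1).trans hL_one
  exact ⟨μ, isProbabilityMeasure_iff_real.2 measureReal_univ, hμ_regular, hμL⟩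

end ContinuousFunctions

section Coboundary

variable {X : Type*} [TopologicalSpace X]

/-- The coboundary operator `f ↦ f ∘ T - f` on `C(X, ℝ)` of a continuous self-map `T` of `X`. -/
def coboundary (T : C(X, X)) : C(X, ℝ) →ₗ[ℝ] C(X, ℝ) :=
  (ContinuousMap.compRightAlgHom ℝ ℝ T).toLinearMap - LinearMap.id

@[simp]
theorem coboundary_apply (T : C(X, X)) (f : C(X, ℝ)) : coboundary T f = f.comp T - f := rfl

theorem forall_mem_iSup_range_coboundary_eq_zero_iff {S : Type*} (T : S → C(X, X))
    (L : C(X, ℝ) →ₗ[ℝ] ℝ) :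
    (∀ v ∈ ⨆ s, LinearMap.range (coboundary (T s)), L v = 0) ↔
      ∀ f s, L (f.comp (T s)) = L f := by
  change (⨆ s, LinearMap.range (coboundary (T s))) ≤ LinearMap.ker L ↔ _
  simp only [iSup_le_iff, LinearMap.range_le_ker_iff, LinearMap.ext_iff, LinearMap.comp_apply,
    coboundary_apply, map_sub, LinearMap.zero_apply, sub_eq_zero]
  exact forall_comm

theorem forall_mem_iSup_range_coboundary_one_le_norm_iff [CompactSpace X] {S : Type*} [Nonempty S]
    (T : S → C(X, X)) :
    (∀ v ∈ ⨆ s, LinearMap.range (coboundary (T s)), 1 ≤ ‖(1 : C(X, ℝ)) - v‖) ↔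
      ∀ n : ℕ, 1 ≤ n → ∀ (s : Fin n → S) (f : Fin n → C(X, ℝ)),
        1 ≤ ‖(1 : C(X, ℝ)) - ∑ i, ((f i).comp (T (s i)) - f i)‖ := by
  simp only [mem_iSup_range_iff_exists_sum, coboundary_apply]
  exact ⟨fun h n hn s f ↦ h _ ⟨n, hn, s, f, rfl⟩,
    fun h _ ⟨n, hn, s, f, hv⟩ ↦ hv ▸ h n hn s f⟩

end Coboundary

theorem exists_invariant_measure_iff_exists_invariant_dual {S X : Type*} [TopologicalSpace X]
    [CompactSpace X] [T2Space X] [MeasurableSpace X] [BorelSpace X] (T : S → C(X, X)) :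
    (∃ μ : Measure X, IsProbabilityMeasure μ ∧ μ.Regular ∧
        ∀ (f : C(X, ℝ)) (s : S), ∫ x, f (T s x) ∂μ = ∫ x, f x ∂μ) ↔
      ∃ L : StrongDual ℝ C(X, ℝ), ‖L‖ ≤ 1 ∧ L 1 = 1 ∧ ∀ f s, L (f.comp (T s)) = L f := by
  constructor
  · rintro ⟨μ, _, -, hμ_inv⟩
    exact ⟨integralDual μ, by simpa using norm_integralDual_le μ, by simp, hμ_inv⟩
  · rintro ⟨L, hL_norm, hL_one, hL_inv⟩
    obtain ⟨μ, hμ_prob, hμ_regular, hμL⟩ :=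
      exists_isProbabilityMeasure_regular_integral_eq hL_norm hL_one
    exact ⟨μ, hμ_prob, hμ_regular, fun f s ↦
      (hμL (f.comp (T s))).trans ((hL_inv f s).trans (hμL f).symm)⟩

theorem invariant_radon_measure_iff_norm_condition_general
    {S X : Type*} [Nonempty S] [TopologicalSpace X] [CompactSpace X] [T2Space X]
    [MeasurableSpace X] [BorelSpace X] (T : S → C(X, X)) :
    (∃ μ : Measure X, IsProbabilityMeasure μ ∧ μ.Regular ∧
        ∀ (f : C(X, ℝ)) (s : S), ∫ x, f (T s x) ∂μ = ∫ x, f x ∂μ) ↔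
      ∀ (n : ℕ), 1 ≤ n → ∀ (s : Fin n → S) (f : Fin n → C(X, ℝ)),
        1 ≤ ‖(1 : C(X, ℝ)) - ∑ i, ((f i).comp (T (s i)) - f i)‖ := by
  rw [exists_invariant_measure_iff_exists_invariant_dual,
    ← forall_mem_iSup_range_coboundary_one_le_norm_iff,
    ← exists_dual_eq_one_iff_forall_one_le_norm_sub (𝕜 := ℝ)]
  exact exists_congr fun L ↦ and_congr_right' <| and_congr_right' <|
    (forall_mem_iSup_range_coboundary_eq_zero_iff T (L : C(X, ℝ) →ₗ[ℝ] ℝ)).symm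

/-- Fact 4.2: for a semigroup `S` with identity acting on a compact Hausdorff space `X`
(with `x ↦ s • x` continuous for each `s`), a left `S`-invariant Radon probability measure
on `X` exists iff `‖1 - ∑ i (f i · s i - f i)‖ ≥ 1` for all finite data. -/
theorem invariant_radon_measure_iff_norm_condition
    {S X : Type*} [Monoid S] [TopologicalSpace X] [CompactSpace X] [T2Space X]
    [MeasurableSpace X] [BorelSpace X] [MulAction S X]
    (hc : ∀ s : S, Continuous fun x : X => s • x) :
    (∃ μ : Measure X, IsProbabilityMeasure μ ∧ μ.Regular ∧
        ∀ (f : C(X, ℝ)) (s : S), ∫ x, f (s • x) ∂μ = ∫ x, f x ∂μ) ↔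
      ∀ (n : ℕ), 1 ≤ n → ∀ (s : Fin n → S) (f : Fin n → C(X, ℝ)),
        1 ≤ ‖(1 : C(X, ℝ)) - ∑ i, ((f i).comp ⟨fun x => s i • x, hc (s i)⟩ - f i)‖ :=
  invariant_radon_measure_iff_norm_condition_general fun s ↦ ⟨fun x ↦ s • x, hc s⟩
end
end

section
/- (Mazur–Orlicz) Let X be a set and let F be a family of pairwise commuting surjective maps from X onto itself. Then there exists a mean I on the space B(X) of all bounded real-valued functions on X such that I(f ∘ h) = I(f) for every f ∈ B(X) and every h ∈ F. Moreover, every closed linear subspace E of B(X) containing the constant function 1 and satisfying f ∘ h ∈ E whenever f ∈ E and h ∈ F admits an F-invariant mean. -/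
open BoundedContinuousFunction MeasureTheory Filter Topology

noncomputable section

/-- The set of bounded real-valued functions on `X`. -/
def Bdd (X : Type*) : Set (X → ℝ) := {f | ∃ C, ∀ x, |f x| ≤ C}

/-- `I` is a mean on the subspace `V` of real-valued functions. -/
def IsMeanOn {X : Type*} (V : Set (X → ℝ)) (I : (X → ℝ) → ℝ) : Prop :=
  I (fun _ => 1) = 1 ∧
  (∀ f g, f ∈ V → g ∈ V → I (f + g) = I f + I g) ∧
  (∀ (r : ℝ) (f), f ∈ V → I (r • f) = r * I f) ∧
  (∀ f, f ∈ V → (∀ x, 0 ≤ f x) → 0 ≤ I f)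

/-!
Composition with commuting maps acts on means by commuting continuous affine maps, and the means
form a nonempty compact convex set in the topology of pointwise convergence, so an invariant mean is
a common fixed point as in the Markov–Kakutani theorem. For a single affine map `f`, a fixed point
is a limit of the averages `aₙ = (x + f x + ⋯ + fⁿ⁻¹ x) / n`, because `f aₙ - aₙ = (fⁿ x - x) / n`
tends to `0`. The fixed points of `f` again form a compact convex set, preserved by every map
commuting with `f`, which gives common fixed points of finitely many maps; compactness handles
infinite families.
-/

/-- The map `f` is affine on `s`, the notion required of the maps in the Markov–Kakutani theorem: it
preserves convex combinations of points of `s`. Unlike in `ConvexOn`, convexity of `s` is not part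
of the definition. -/
def AffineOn {E F : Type*} [AddCommGroup E] [Module ℝ E] [AddCommGroup F] [Module ℝ F]
    (s : Set E) (f : E → F) : Prop :=
  ∀ ⦃x⦄, x ∈ s → ∀ ⦃y⦄, y ∈ s → ∀ ⦃a b : ℝ⦄, 0 ≤ a → 0 ≤ b → a + b = 1 →
    f (a • x + b • y) = a • f x + b • f y

namespace AffineOn

variable {E F : Type*} [AddCommGroup E] [Module ℝ E] [AddCommGroup F] [Module ℝ F] {s t : Set E}

theorem mono {f : E → F} (hf : AffineOn s f) (hts : t ⊆ s) : AffineOn t f :=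
  fun _ hx _ hy => hf (hts hx) (hts hy)

theorem convex_graphOn {f : E → F} (hf : AffineOn s f) (hs : Convex ℝ s) :
    Convex ℝ (s.graphOn f) := by
  rintro _ ⟨x, hx, rfl⟩ _ ⟨y, hy, rfl⟩ a b ha hb hab
  exact ⟨a • x + b • y, hs hx hy ha hb hab, Prod.ext rfl (hf hx hy ha hb hab)⟩

theorem map_sum {f : E → F} (hf : AffineOn s f) (hs : Convex ℝ s) {ι : Type*} {u : Finset ι}
    {w : ι → ℝ} {z : ι → E} (hw₀ : ∀ i ∈ u, 0 ≤ w i) (hw₁ : ∑ i ∈ u, w i = 1)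
    (hz : ∀ i ∈ u, z i ∈ s) :
    f (∑ i ∈ u, w i • z i) = ∑ i ∈ u, w i • f (z i) := by
  have hmem := (hf.convex_graphOn hs).sum_mem hw₀ hw₁ fun i hi =>
    Set.mem_image_of_mem _ (hz i hi)
  simpa only [Prod.fst_sum, Prod.snd_sum, Prod.smul_mk] using (Set.mem_graphOn.1 hmem).2

theorem convex_inter_fixedPoints {f : E → E} (hf : AffineOn s f) (hs : Convex ℝ s) :
    Convex ℝ (s ∩ Function.fixedPoints f) := by
  rintro x ⟨hx, hfx⟩ y ⟨hy, hfy⟩ a b ha hb hab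
  refine ⟨hs hx hy ha hb hab, ?_⟩
  rw [Function.mem_fixedPoints_iff, hf hx hy ha hb hab, hfx, hfy]

end AffineOn

section BirkhoffAverage

variable {E : Type*} [AddCommGroup E] [Module ℝ E] {s : Set E} {f : E → E} {x : E} {n : ℕ}

theorem birkhoffAverage_id_eq_sum (f : E → E) (n : ℕ) (x : E) :
    birkhoffAverage ℝ f id n x = ∑ k ∈ Finset.range n, (n : ℝ)⁻¹ • f^[k] x :=
  Finset.smul_sum

theorem sum_range_inv_natCast (hn : n ≠ 0) : ∑ _k ∈ Finset.range n, (n : ℝ)⁻¹ = 1 := by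
  simp [hn]

theorem birkhoffAverage_id_mem (hs : Convex ℝ s) (hmaps : Set.MapsTo f s s) (hx : x ∈ s)
    (hn : n ≠ 0) : birkhoffAverage ℝ f id n x ∈ s := by
  rw [birkhoffAverage_id_eq_sum]
  exact hs.sum_mem (fun _ _ => by positivity) (sum_range_inv_natCast hn)
    fun k _ => hmaps.iterate k hx

theorem AffineOn.map_birkhoffAverage_id (hf : AffineOn s f) (hs : Convex ℝ s)
    (hmaps : Set.MapsTo f s s) (hx : x ∈ s) (hn : n ≠ 0) :
    f (birkhoffAverage ℝ f id n x) = birkhoffAverage ℝ f id n (f x) := by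
  simp only [birkhoffAverage_id_eq_sum, ← Function.iterate_succ_apply, Function.iterate_succ_apply']
  exact hf.map_sum hs (fun _ _ => by positivity) (sum_range_inv_natCast hn)
    fun k _ => hmaps.iterate k hx

end BirkhoffAverage

theorem isClosed_inter_fixedPoints {Y : Type*} [TopologicalSpace Y] [T2Space Y] {s : Set Y}
    {f : Y → Y} (hs : IsClosed s) (hf : ContinuousOn f s) :
    IsClosed (s ∩ Function.fixedPoints f) :=
  (hf.prodMk continuousOn_id).preimage_isClosed_of_isClosed hs isClosed_diagonal

section MarkovKakutani

open scoped Pointwise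

variable {E : Type*} [AddCommGroup E] [Module ℝ E] [TopologicalSpace E] [IsTopologicalAddGroup E]
  {s : Set E} {f : E → E}

theorem AffineOn.tendsto_map_birkhoffAverage_sub {x : E} (hf : AffineOn s f)
    (hbdd : Bornology.IsVonNBounded ℝ s) (hconv : Convex ℝ s) (hmaps : Set.MapsTo f s s)
    (hx : x ∈ s) :
    Tendsto (fun n => f (birkhoffAverage ℝ f id n x) - birkhoffAverage ℝ f id n x)
      atTop (𝓝 0) := by
  have hmem : ∀ n : ℕ, f^[n] x - x ∈ s - s := fun n => Set.sub_mem_sub (hmaps.iterate n hx) hx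
  have hlim := (hbdd.sub hbdd).smul_tendsto_zero (.of_forall hmem)
    (tendsto_inv_atTop_nhds_zero_nat (𝕜 := ℝ))
  refine hlim.congr' ?_
  filter_upwards [eventually_ne_atTop 0] with n hn
  rw [hf.map_birkhoffAverage_id hconv hmaps hx hn, birkhoffAverage_apply_sub_birkhoffAverage]
  rfl

variable [ContinuousSMul ℝ E] [T2Space E]

theorem AffineOn.exists_isFixedPt (hf : AffineOn s f) (hs : IsCompact s) (hne : s.Nonempty)
    (hconv : Convex ℝ s) (hmaps : Set.MapsTo f s s) (hcont : ContinuousOn f s) :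
    ∃ y ∈ s, Function.IsFixedPt f y := by
  obtain ⟨x, hx⟩ := hne
  set a : ℕ → E := fun n => birkhoffAverage ℝ f id n x
  have hle : (hyperfilter ℕ : Filter ℕ) ≤ atTop := Nat.hyperfilter_le_atTop
  have ha_mem : ∀ᶠ n in hyperfilter ℕ, a n ∈ s :=
    ((eventually_ne_atTop 0).mono fun n hn => birkhoffAverage_id_mem hconv hmaps hx hn).filter_mono
      hle
  obtain ⟨y, hy, ha⟩ : ∃ y ∈ s, Tendsto a (hyperfilter ℕ) (𝓝 y) :=
    hs.ultrafilter_le_nhds ((hyperfilter ℕ).map a) (le_principal_iff.2 ha_mem)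
  have hfa : Tendsto (fun n => f (a n)) (hyperfilter ℕ) (𝓝 (f y)) :=
    (hcont y hy).tendsto.comp (tendsto_nhdsWithin_iff.2 ⟨ha, ha_mem⟩)
  have hsub : Tendsto (fun n => f (a n) - a n) (hyperfilter ℕ) (𝓝 0) :=
    (hf.tendsto_map_birkhoffAverage_sub (hs.isVonNBounded ℝ) hconv hmaps hx).mono_left hle
  exact ⟨y, hy, sub_eq_zero.1 (tendsto_nhds_unique (hfa.sub ha) hsub)⟩

variable {ι : Type*} {T : ι → E → E}

theorem inter_biInter_fixedPoints_nonempty (hs : IsCompact s) (hne : s.Nonempty)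
    (hconv : Convex ℝ s) (haff : ∀ i, AffineOn s (T i)) (hcont : ∀ i, ContinuousOn (T i) s)
    (hmaps : ∀ i, Set.MapsTo (T i) s s) (hcomm : ∀ i j, ∀ x ∈ s, T i (T j x) = T j (T i x))
    (u : Finset ι) : (s ∩ ⋂ i ∈ u, s ∩ Function.fixedPoints (T i)).Nonempty := by
  classical
  induction u using Finset.induction_on with
  | empty => simpa using hne
  | insert j u _ ih =>
    set C := s ∩ ⋂ i ∈ u, s ∩ Function.fixedPoints (T i)
    have hCs : C ⊆ s := Set.inter_subset_left
    have hC_compact : IsCompact C := hs.inter_right <|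
      isClosed_biInter fun i _ => isClosed_inter_fixedPoints hs.isClosed (hcont i)
    have hC_convex : Convex ℝ C :=
      hconv.inter <| convex_iInter₂ fun i _ => (haff i).convex_inter_fixedPoints hconv
    have hC_maps : Set.MapsTo (T j) C C := fun x ⟨hx, hfix⟩ =>
      ⟨hmaps j hx, Set.mem_iInter₂.2 fun i hi => ⟨hmaps j hx,
        (hcomm i j x hx).trans (congrArg (T j) (Set.mem_iInter₂.1 hfix i hi).2)⟩⟩
    obtain ⟨y, hyC, hy⟩ := ((haff j).mono hCs).exists_isFixedPt hC_compact ih hC_convex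
      hC_maps ((hcont j).mono hCs)
    refine ⟨y, hyC.1, ?_⟩
    rw [Finset.set_biInter_insert]
    exact ⟨⟨hyC.1, hy⟩, hyC.2⟩

theorem markov_kakutani (hs : IsCompact s) (hne : s.Nonempty) (hconv : Convex ℝ s)
    (haff : ∀ i, AffineOn s (T i)) (hcont : ∀ i, ContinuousOn (T i) s)
    (hmaps : ∀ i, Set.MapsTo (T i) s s) (hcomm : ∀ i j, ∀ x ∈ s, T i (T j x) = T j (T i x)) :
    ∃ x ∈ s, ∀ i, Function.IsFixedPt (T i) x := by
  obtain ⟨x, hx, hfix⟩ := hs.inter_iInter_nonempty _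
    (fun i => isClosed_inter_fixedPoints hs.isClosed (hcont i))
    (inter_biInter_fixedPoints_nonempty hs hne hconv haff hcont hmaps hcomm)
  exact ⟨x, hx, fun i => (Set.mem_iInter.1 hfix i).2⟩

end MarkovKakutani

namespace Bdd

variable {X : Type*} {f g : X → ℝ}

theorem const_mem (c : ℝ) : (fun _ => c) ∈ Bdd X := ⟨|c|, fun _ => le_rfl⟩

theorem add_mem (hf : f ∈ Bdd X) (hg : g ∈ Bdd X) : f + g ∈ Bdd X := by
  obtain ⟨C, hC⟩ := hf
  obtain ⟨D, hD⟩ := hg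
  exact ⟨C + D, fun x => (abs_add_le _ _).trans (add_le_add (hC x) (hD x))⟩

theorem smul_mem (r : ℝ) (hf : f ∈ Bdd X) : r • f ∈ Bdd X := by
  obtain ⟨C, hC⟩ := hf
  refine ⟨|r| * C, fun x => ?_⟩
  rw [Pi.smul_apply, smul_eq_mul, abs_mul]
  exact mul_le_mul_of_nonneg_left (hC x) (abs_nonneg r)

theorem comp_mem {Y : Type*} (hf : f ∈ Bdd X) (h : Y → X) : f ∘ h ∈ Bdd Y :=
  hf.imp fun _ hC y => hC (h y)

end Bdd

namespace IsMeanOn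

variable {X : Type*} {V W : Set (X → ℝ)} {I J : (X → ℝ) → ℝ}

theorem mono (hI : IsMeanOn W I) (hVW : V ⊆ W) : IsMeanOn V I :=
  ⟨hI.1, fun f g hf hg => hI.2.1 f g (hVW hf) (hVW hg), fun r f hf => hI.2.2.1 r f (hVW hf),
    fun f hf => hI.2.2.2 f (hVW hf)⟩

theorem eval (V : Set (X → ℝ)) (x : X) : IsMeanOn V fun f => f x :=
  ⟨rfl, fun _ _ _ _ => rfl, fun _ _ _ => rfl, fun _ _ hf => hf x⟩

theorem comp_right {Y : Type*} {V : Set (Y → ℝ)} (hI : IsMeanOn W I) (h : X → Y)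
    (hV : ∀ f ∈ V, f ∘ h ∈ W) : IsMeanOn V fun f => I (f ∘ h) :=
  ⟨hI.1, fun _ _ hf hg => hI.2.1 _ _ (hV _ hf) (hV _ hg), fun r _ hf => hI.2.2.1 r _ (hV _ hf),
    fun _ hf hf₀ => hI.2.2.2 _ (hV _ hf) fun x => hf₀ (h x)⟩

theorem smul_add_smul (hI : IsMeanOn V I) (hJ : IsMeanOn V J) {a b : ℝ} (ha : 0 ≤ a) (hb : 0 ≤ b)
    (hab : a + b = 1) : IsMeanOn V (a • I + b • J) := by
  obtain ⟨hI_one, hI_add, hI_smul, hI_nonneg⟩ := hI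
  obtain ⟨hJ_one, hJ_add, hJ_smul, hJ_nonneg⟩ := hJ
  simp only [IsMeanOn, Pi.add_apply, Pi.smul_apply, smul_eq_mul]
  refine ⟨by rw [hI_one, hJ_one, mul_one, mul_one, hab], fun f g hf hg => ?_, fun r f hf => ?_,
    fun f hf hf₀ => ?_⟩
  · rw [hI_add f g hf hg, hJ_add f g hf hg]
    ring
  · rw [hI_smul r f hf, hJ_smul r f hf]
    ring
  · exact add_nonneg (mul_nonneg ha (hI_nonneg f hf hf₀)) (mul_nonneg hb (hJ_nonneg f hf hf₀))

theorem indicator (hI : IsMeanOn (Bdd X) I) : IsMeanOn (Bdd X) ((Bdd X).indicator I) := by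
  obtain ⟨h_one, h_add, h_smul, h_nonneg⟩ := hI
  refine ⟨?_, fun f g hf hg => ?_, fun r f hf => ?_, fun f hf hf₀ => ?_⟩
  · rw [Set.indicator_of_mem (Bdd.const_mem 1), h_one]
  · simp only [Set.indicator_of_mem, hf, hg, Bdd.add_mem, h_add]
  · simp only [Set.indicator_of_mem, hf, Bdd.smul_mem, h_smul]
  · simpa only [Set.indicator_of_mem hf] using h_nonneg f hf hf₀

theorem apply_const (hI : IsMeanOn (Bdd X) I) (c : ℝ) : I (fun _ => c) = c := by
  have hc : (fun _ : X => c) = c • fun _ => (1 : ℝ) := by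
    ext
    simp
  rw [hc, hI.2.2.1 c _ (Bdd.const_mem 1), hI.1, mul_one]

theorem apply_le_apply (hI : IsMeanOn (Bdd X) I) {f g : X → ℝ} (hf : f ∈ Bdd X) (hg : g ∈ Bdd X)
    (hfg : ∀ x, f x ≤ g x) : I f ≤ I g := by
  have hneg : (-1 : ℝ) • f ∈ Bdd X := Bdd.smul_mem _ hf
  have hsub : 0 ≤ I (g + (-1 : ℝ) • f) :=
    hI.2.2.2 _ (Bdd.add_mem hg hneg) fun x => by simpa using hfg x
  rw [hI.2.1 _ _ hg hneg, hI.2.2.1 _ _ hf] at hsub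
  linarith

theorem abs_apply_le (hI : IsMeanOn (Bdd X) I) {f : X → ℝ} {C : ℝ} (hC : ∀ x, |f x| ≤ C) :
    |I f| ≤ C := by
  have hf : f ∈ Bdd X := ⟨C, hC⟩
  rw [abs_le]
  constructor
  · simpa only [hI.apply_const] using
      hI.apply_le_apply (Bdd.const_mem (-C)) hf fun x => (abs_le.1 (hC x)).1
  · simpa only [hI.apply_const] using
      hI.apply_le_apply hf (Bdd.const_mem C) fun x => (abs_le.1 (hC x)).2

end IsMeanOn

theorem isClosed_setOf_isMeanOn {X : Type*} (V : Set (X → ℝ)) : IsClosed {I | IsMeanOn V I} := by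
  simp only [IsMeanOn, Set.ofPred_and, Set.ofPred_forall]
  refine (isClosed_eq (by fun_prop) (by fun_prop)).inter <| .inter ?_ <| .inter ?_ ?_
  · exact isClosed_iInter fun f => isClosed_iInter fun g => isClosed_iInter fun _ =>
      isClosed_iInter fun _ => isClosed_eq (by fun_prop) (by fun_prop)
  · exact isClosed_iInter fun r => isClosed_iInter fun f => isClosed_iInter fun _ =>
      isClosed_eq (by fun_prop) (by fun_prop)
  · exact isClosed_iInter fun f => isClosed_iInter fun _ => isClosed_iInter fun _ =>
      isClosed_le (by fun_prop) (by fun_prop)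

/-- The set of means on `B(X)`, to which the Markov–Kakutani theorem is applied. `IsMeanOn` leaves
the values at unbounded functions arbitrary; they are set to `0` here to make the set compact in
the topology of pointwise convergence. -/
def boundedMeans (X : Type*) : Set ((X → ℝ) → ℝ) :=
  {I | IsMeanOn (Bdd X) I ∧ ∀ f ∉ Bdd X, I f = 0}

/-- The action of `h : X → X` on functionals on `B(X)`, sending `I` to `f ↦ I (f ∘ h)`. The
indicator keeps the value `0` at unbounded functions `f`, for which `f ∘ h` may be bounded. -/
def meanPushforward {X : Type*} (h : X → X) (I : (X → ℝ) → ℝ) : (X → ℝ) → ℝ :=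
  (Bdd X).indicator fun f => I (f ∘ h)

section BoundedMeans

variable {X : Type*}

theorem IsMeanOn.indicator_mem_boundedMeans {I : (X → ℝ) → ℝ} (hI : IsMeanOn (Bdd X) I) :
    (Bdd X).indicator I ∈ boundedMeans X :=
  ⟨hI.indicator, fun _ hf => Set.indicator_of_notMem hf _⟩

theorem boundedMeans_nonempty [Nonempty X] : (boundedMeans X).Nonempty :=
  ‹Nonempty X›.elim fun x => ⟨_, (IsMeanOn.eval (Bdd X) x).indicator_mem_boundedMeans⟩

theorem convex_boundedMeans : Convex ℝ (boundedMeans X) := fun I hI J hJ a b ha hb hab =>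
  ⟨hI.1.smul_add_smul hJ.1 ha hb hab, fun f hf => by simp [hI.2 f hf, hJ.2 f hf]⟩

theorem isClosed_boundedMeans : IsClosed (boundedMeans X) := by
  have hzero : IsClosed {I : (X → ℝ) → ℝ | ∀ f ∉ Bdd X, I f = 0} := by
    simp only [Set.ofPred_forall]
    exact isClosed_iInter fun f => isClosed_iInter fun _ => isClosed_eq (by fun_prop) (by fun_prop)
  exact (isClosed_setOf_isMeanOn (Bdd X)).inter hzero

theorem exists_forall_mem_boundedMeans_abs_le (f : X → ℝ) :
    ∃ C : ℝ, ∀ I ∈ boundedMeans X, |I f| ≤ C := by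
  by_cases hf : f ∈ Bdd X
  · exact hf.imp fun C hC I hI => hI.1.abs_apply_le hC
  · exact ⟨0, fun I hI => by rw [hI.2 f hf, abs_zero]⟩

theorem isCompact_boundedMeans : IsCompact (boundedMeans X) := by
  choose C hC using exists_forall_mem_boundedMeans_abs_le (X := X)
  have hbox : IsCompact (Set.univ.pi fun f => Set.Icc (-C f) (C f)) :=
    isCompact_univ_pi fun f => isCompact_Icc
  exact hbox.of_isClosed_subset isClosed_boundedMeans fun I hI f _ => abs_le.1 (hC f I hI)

theorem meanPushforward_apply_of_mem (h : X → X) (I : (X → ℝ) → ℝ) {f : X → ℝ} (hf : f ∈ Bdd X) :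
    meanPushforward h I f = I (f ∘ h) :=
  Set.indicator_of_mem hf _

theorem meanPushforward_meanPushforward (h h' : X → X) (I : (X → ℝ) → ℝ) :
    meanPushforward h (meanPushforward h' I) = meanPushforward (h ∘ h') I :=
  Set.indicator_congr fun _ hf => meanPushforward_apply_of_mem h' I (Bdd.comp_mem hf h)

theorem mapsTo_meanPushforward_boundedMeans (h : X → X) :
    Set.MapsTo (meanPushforward h) (boundedMeans X) (boundedMeans X) := fun _ hI =>
  (hI.1.comp_right h fun _ hf => Bdd.comp_mem hf h).indicator_mem_boundedMeans

theorem continuous_meanPushforward (h : X → X) : Continuous (meanPushforward h) := by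
  refine continuous_pi fun f => ?_
  by_cases hf : f ∈ Bdd X
  · simpa only [meanPushforward_apply_of_mem h _ hf] using continuous_apply (f ∘ h)
  · simpa only [meanPushforward, Set.indicator_of_notMem hf] using continuous_const

theorem affineOn_meanPushforward (s : Set ((X → ℝ) → ℝ)) (h : X → X) :
    AffineOn s (meanPushforward h) := by
  intro I _ J _ a b _ _ _
  ext f
  by_cases hf : f ∈ Bdd X <;> simp [meanPushforward, hf]

end BoundedMeans

theorem mazur_orlicz_general {X : Type*} [Nonempty X] (F : Set (X → X))
    (hcomm : ∀ h ∈ F, ∀ h' ∈ F, h ∘ h' = h' ∘ h) :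
    ∃ I : (X → ℝ) → ℝ, IsMeanOn (Bdd X) I ∧ ∀ f ∈ Bdd X, ∀ h ∈ F, I (f ∘ h) = I f := by
  obtain ⟨I, hI, hfix⟩ := markov_kakutani (T := fun h : F => meanPushforward h.1)
    isCompact_boundedMeans boundedMeans_nonempty convex_boundedMeans
    (fun h => affineOn_meanPushforward (boundedMeans X) h.1)
    (fun h => (continuous_meanPushforward h.1).continuousOn)
    (fun h => mapsTo_meanPushforward_boundedMeans h.1)
    (fun h h' I _ => by simp only [meanPushforward_meanPushforward, hcomm h h.2 h' h'.2])
  refine ⟨I, hI.1, fun f hf h hh => ?_⟩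
  rw [← meanPushforward_apply_of_mem h I hf, hfix ⟨h, hh⟩]

/-- Corollary 4.13 (Mazur–Orlicz): a family of commuting surjections of a set `X` admits an
invariant mean on `B(X)`, and indeed on every invariant closed linear subspace of `B(X)`
containing the constants. -/
theorem mazur_orlicz
    {X : Type*} [Nonempty X] (F : Set (X → X))
    (hsurj : ∀ h ∈ F, Function.Surjective h)
    (hcomm : ∀ h ∈ F, ∀ h' ∈ F, h ∘ h' = h' ∘ h) :
    (∃ I : (X → ℝ) → ℝ, IsMeanOn (Bdd X) I ∧
        ∀ f ∈ Bdd X, ∀ h ∈ F, I (f ∘ h) = I f) ∧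
      ∀ E : Submodule ℝ (X → ℝ), (E : Set (X → ℝ)) ⊆ Bdd X →
        (fun _ => (1 : ℝ)) ∈ E →
        (∀ f ∈ Bdd X, (∀ ε > 0, ∃ g ∈ E, ∀ x, |f x - g x| ≤ ε) → f ∈ E) →
        (∀ f ∈ E, ∀ h ∈ F, f ∘ h ∈ E) →
        ∃ J : (X → ℝ) → ℝ, IsMeanOn (E : Set (X → ℝ)) J ∧
          ∀ f ∈ (E : Set (X → ℝ)), ∀ h ∈ F, J (f ∘ h) = J f := by
  obtain ⟨I, hI, hinv⟩ := mazur_orlicz_general F hcomm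
  exact ⟨⟨I, hI, hinv⟩, fun E hE _ _ _ => ⟨I, hI.mono hE, fun f hf => hinv f (hE hf)⟩⟩
end
end

section
/- Let S be a semigroup with identity acting on a compact Hausdorff space X from the left (with x ↦ s·x continuous for each s ∈ S). Then there exists a multiplicative left S-invariant Radon probability measure on X if and only if for every n ≥ 1, all s_1, …, s_n ∈ S and all f_1, …, f_n, g_1, …, g_n ∈ C(X), one has ‖1 − Σ_{i=1}^n g_i × (f_i·s_i − f_i)‖_∞ ≥ 1, where × denotes pointwise product, 1 the constant function 1, and ‖·‖_∞ the supremum norm on C(X). -/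
open BoundedContinuousFunction MeasureTheory Filter Topology

noncomputable section

/-!
Let `I` be the ideal of `C(X, ℝ)` generated by the functions `f·s - f`. In a Banach algebra every
element at distance less than `1` from `1` is a unit, so the norm condition says exactly that `I` is
proper. Integration against a multiplicative invariant probability measure is a ring homomorphism
that kills `I`, so `I` is proper when such a measure exists. Conversely, a proper ideal of `C(X, ℝ)`
has a common zero `x`; a common zero of `I` is a point at which `f·s` and `f` always agree, so the
Dirac measure at `x` is invariant.
-/

section Ideals

theorem mem_ideal_span_range_iff_exists_fin_sum {ι R : Type*} [Nonempty ι] [Semiring R]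
    {v : ι → R} {r : R} :
    r ∈ Ideal.span (Set.range v) ↔
      ∃ n, 1 ≤ n ∧ ∃ (j : Fin n → ι) (a : Fin n → R), r = ∑ k, a k * v (j k) := by
  constructor
  · intro hr
    obtain ⟨n, a, w, rfl⟩ := Submodule.mem_span_set'.mp hr
    choose j hj using fun k => (w k).2
    -- A zero term is prepended because the sum may be empty.
    refine ⟨n + 1, Nat.le_add_left 1 n, Fin.cons (Classical.arbitrary ι) j, Fin.cons 0 a, ?_⟩
    simp [Fin.sum_univ_succ, hj]
  · rintro ⟨n, -, j, a, rfl⟩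
    exact Ideal.sum_mem _ fun k _ =>
      Ideal.mul_mem_left _ _ (Ideal.subset_span (Set.mem_range_self (j k)))

theorem ideal_ne_top_iff_forall_one_le_norm_one_sub {R : Type*} [NormedRing R]
    [HasSummableGeomSeries R] {I : Ideal R} : I ≠ ⊤ ↔ ∀ h ∈ I, 1 ≤ ‖1 - h‖ := by
  constructor
  · intro hI h hh
    have h_nonunit : h ∈ nonunits R := fun hu => hI (I.eq_top_of_isUnit_mem hh hu)
    simpa [dist_eq_norm, norm_sub_rev] using nonunits.subset_compl_ball h_nonunit
  · rintro hnorm rfl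
    simpa using (hnorm 1 Submodule.mem_top).trans_lt' zero_lt_one

theorem exists_common_zero_of_ideal_ne_top {X 𝕜 : Type*} [TopologicalSpace X] [CompactSpace X]
    [T2Space X] [RCLike 𝕜] {I : Ideal C(X, 𝕜)} (hI : I ≠ ⊤) : ∃ x, ∀ f ∈ I, f x = 0 := by
  by_contra! hzero
  have h_univ : ContinuousMap.setOfIdeal I = Set.univ :=
    Set.eq_univ_of_forall fun x => ContinuousMap.mem_setOfIdeal.mpr (hzero x)
  have h_closure : I.closure = ⊤ := by
    rw [← ContinuousMap.idealOfSet_ofIdeal_eq_closure, h_univ, Ideal.eq_top_iff_one]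
    simp [ContinuousMap.mem_idealOfSet]
  exact I.closure_ne_top hI h_closure

end Ideals

section DisplacementIdeal

variable {ι X R : Type*} [TopologicalSpace X] [Ring R] [TopologicalSpace R]
  [IsTopologicalRing R]

variable (R) in
/-- The (left) ideal of `C(X, R)` generated by the displacements `f ∘ φ i - f`. A ring homomorphism
out of `C(X, R)` is invariant under every `φ i` exactly when it kills this ideal. The maps `φ i` are
an arbitrary family, indexed by `S` in the case of an action of `S`. -/
def displacementIdeal (φ : ι → C(X, X)) : Ideal C(X, R) :=
  Ideal.span (Set.range fun p : ι × C(X, R) => p.2.comp (φ p.1) - p.2)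

theorem comp_sub_mem_displacementIdeal (φ : ι → C(X, X)) (i : ι) (f : C(X, R)) :
    f.comp (φ i) - f ∈ displacementIdeal R φ :=
  Ideal.subset_span ⟨(i, f), rfl⟩

theorem mem_displacementIdeal_iff_exists_fin_sum [Nonempty ι] {φ : ι → C(X, X)} {h : C(X, R)} :
    h ∈ displacementIdeal R φ ↔ ∃ n, 1 ≤ n ∧ ∃ (i : Fin n → ι) (f g : Fin n → C(X, R)),
      h = ∑ k, g k * ((f k).comp (φ (i k)) - f k) := by
  refine mem_ideal_span_range_iff_exists_fin_sum.trans
    (exists_congr fun n => and_congr_right fun _ => ?_)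
  constructor
  · rintro ⟨p, g, rfl⟩
    exact ⟨fun k => (p k).1, fun k => (p k).2, g, rfl⟩
  · rintro ⟨i, f, g, rfl⟩
    exact ⟨fun k => (i k, f k), g, rfl⟩

theorem displacementIdeal_le_ker {A : Type*} [Ring A] {φ : ι → C(X, X)} {Φ : C(X, R) →+* A}
    (hΦ : ∀ f i, Φ (f.comp (φ i)) = Φ f) : displacementIdeal R φ ≤ RingHom.ker Φ := by
  rw [displacementIdeal, Ideal.span_le]
  rintro _ ⟨⟨i, f⟩, rfl⟩
  simp [RingHom.mem_ker, hΦ]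

end DisplacementIdeal

theorem displacementIdeal_ne_top_iff_forall_one_le_norm {ι X R : Type*} [Nonempty ι]
    [TopologicalSpace X] [CompactSpace X] [NormedRing R] [CompleteSpace R]
    (φ : ι → C(X, X)) :
    displacementIdeal R φ ≠ ⊤ ↔
      ∀ n : ℕ, 1 ≤ n → ∀ (i : Fin n → ι) (f g : Fin n → C(X, R)),
        1 ≤ ‖(1 : C(X, R)) - ∑ k, g k * ((f k).comp (φ (i k)) - f k)‖ := by
  rw [ideal_ne_top_iff_forall_one_le_norm_one_sub]
  constructor
  · exact fun hnorm n hn i f g =>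
      hnorm _ (mem_displacementIdeal_iff_exists_fin_sum.mpr ⟨n, hn, i, f, g, rfl⟩)
  · intro hnorm h hh
    obtain ⟨n, hn, i, f, g, rfl⟩ := mem_displacementIdeal_iff_exists_fin_sum.mp hh
    exact hnorm n hn i f g

section Measures

variable {X : Type*} [TopologicalSpace X] [MeasurableSpace X] [OpensMeasurableSpace X]

/-- Integration against a probability measure that is multiplicative on `C(X, 𝕜)`, as a ring
homomorphism. -/
def integralRingHom {𝕜 : Type*} [RCLike 𝕜] [CompactSpace X] (μ : Measure X)
    [IsProbabilityMeasure μ]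
    (hmul : ∀ f g : C(X, 𝕜), ∫ x, (f * g) x ∂μ = (∫ x, f x ∂μ) * ∫ x, g x ∂μ) :
    C(X, 𝕜) →+* 𝕜 :=
  RingHom.mk' ⟨⟨fun f => ∫ x, f x ∂μ, by simp⟩, hmul⟩ fun f g =>
    have integrable (f : C(X, 𝕜)) : Integrable f μ :=
      f.continuous.integrable_of_hasCompactSupport (.of_compactSpace f)
    integral_add (integrable f) (integrable g)

theorem regular_dirac [T1Space X] (x : X) : (Measure.dirac x).Regular where
  outerRegular A _ r hr := by
    by_cases hxA : x ∈ A
    · exact ⟨Set.univ, A.subset_univ, isOpen_univ, by simpa [hxA] using hr⟩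
    · exact ⟨{x}ᶜ, by simpa using hxA, isOpen_compl_singleton, by simpa using hr.pos⟩
  innerRegular U hU r hr := by
    have hxU : x ∈ U := by
      by_contra hxU
      simp [hU.measurableSet, hxU] at hr
    exact ⟨{x}, by simpa using hxU, isCompact_singleton, by simpa [hxU] using hr⟩

end Measures

theorem exists_invariant_multiplicative_iff_displacementIdeal_ne_top {ι X 𝕜 : Type*}
    [TopologicalSpace X] [CompactSpace X] [T2Space X] [MeasurableSpace X] [BorelSpace X]
    [RCLike 𝕜] (φ : ι → C(X, X)) :
    (∃ μ : Measure X, IsProbabilityMeasure μ ∧ μ.Regular ∧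
        (∀ (f : C(X, 𝕜)) (i : ι), ∫ x, f (φ i x) ∂μ = ∫ x, f x ∂μ) ∧
        (∀ f g : C(X, 𝕜), ∫ x, (f * g) x ∂μ = (∫ x, f x ∂μ) * ∫ x, g x ∂μ)) ↔
      displacementIdeal 𝕜 φ ≠ ⊤ := by
  constructor
  · rintro ⟨μ, _, -, hinv, hmul⟩
    have h_le : displacementIdeal 𝕜 φ ≤ RingHom.ker (integralRingHom μ hmul) :=
      displacementIdeal_le_ker hinv
    exact ne_top_of_le_ne_top (RingHom.ker_ne_top _) h_le
  · intro hI
    obtain ⟨x, hx⟩ := exists_common_zero_of_ideal_ne_top hI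
    have h_agree (f : C(X, 𝕜)) (i : ι) : f (φ i x) = f x :=
      sub_eq_zero.mp (hx _ (comp_sub_mem_displacementIdeal φ i f))
    exact ⟨Measure.dirac x, inferInstance, regular_dirac x, by simpa using h_agree, by simp⟩

theorem mult_invariant_radon_measure_iff_norm_condition_general
    {ι X : Type*} [Nonempty ι] [TopologicalSpace X] [CompactSpace X] [T2Space X]
    [MeasurableSpace X] [BorelSpace X] (φ : ι → C(X, X)) :
    (∃ μ : Measure X, IsProbabilityMeasure μ ∧ μ.Regular ∧
        (∀ (f : C(X, ℝ)) (i : ι), ∫ x, f (φ i x) ∂μ = ∫ x, f x ∂μ) ∧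
        (∀ f g : C(X, ℝ), ∫ x, (f * g) x ∂μ = (∫ x, f x ∂μ) * ∫ x, g x ∂μ)) ↔
      ∀ (n : ℕ), 1 ≤ n → ∀ (i : Fin n → ι) (f g : Fin n → C(X, ℝ)),
        1 ≤ ‖(1 : C(X, ℝ)) - ∑ k, g k * ((f k).comp (φ (i k)) - f k)‖ :=
  (exists_invariant_multiplicative_iff_displacementIdeal_ne_top φ).trans
    (displacementIdeal_ne_top_iff_forall_one_le_norm φ)

/-- The multiplicative analogue of Fact 4.2: a multiplicative left `S`-invariant Radon
probability measure on `X` exists iff `‖1 - ∑ i g i × (f i · s i - f i)‖ ≥ 1` for all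
finite data. -/
theorem mult_invariant_radon_measure_iff_norm_condition
    {S X : Type*} [Monoid S] [TopologicalSpace X] [CompactSpace X] [T2Space X]
    [MeasurableSpace X] [BorelSpace X] [MulAction S X]
    (hc : ∀ s : S, Continuous fun x : X => s • x) :
    (∃ μ : Measure X, IsProbabilityMeasure μ ∧ μ.Regular ∧
        (∀ (f : C(X, ℝ)) (s : S), ∫ x, f (s • x) ∂μ = ∫ x, f x ∂μ) ∧
        (∀ f g : C(X, ℝ), ∫ x, (f * g) x ∂μ = (∫ x, f x ∂μ) * ∫ x, g x ∂μ)) ↔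
      ∀ (n : ℕ), 1 ≤ n → ∀ (s : Fin n → S) (f g : Fin n → C(X, ℝ)),
        1 ≤ ‖(1 : C(X, ℝ)) -
          ∑ i, g i * ((f i).comp ⟨fun x => s i • x, hc (s i)⟩ - f i)‖ :=
  mult_invariant_radon_measure_iff_norm_condition_general fun s => ⟨fun x => s • x, hc s⟩
end
end

section
/- Let X be a compact Hausdorff space and (M, B, μ) a probability measure space with X ⊆ M. Suppose that to each f ∈ C(X) is assigned a bounded B-measurable function R_f : M → ℝ such that: R_f restricted to X equals f; R_1 is the constant function 1; R_{f+g} = R_f + R_g and R_{rf} = r·R_f for all f, g ∈ C(X) and r ∈ ℝ; R_{f×g} = R_f × R_g (pointwise product); and R_{max(f,g)} = max(R_f, R_g). Suppose moreover that B is the σ-algebra generated by the sets {x ∈ M : R_f(x) > 0}, f ∈ C(X). Then X has full outer measure in M (μ*(X) = 1), the subspace measure μ_X on X is a regular Baire probability measure satisfying ∫_X f dμ_X = ∫_M R_f dμ for every f ∈ C(X), and there exists a Radon probability measure ν on X with ∫ f dν = ∫_M R_f dμ for every f ∈ C(X). -/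
open BoundedContinuousFunction MeasureTheory Filter Topology

noncomputable section

/-!
For each `m : M`, evaluation `f ↦ R f m` is a character of `C(X)`, hence evaluation at a unique
point `p m : X`. The map `p : M → X` is a retraction onto `X`, and the hypothesis on the
σ-algebra of `M` says exactly that it is pulled back along `p` from the Baire σ-algebra of `X`.
A measurable superset of a Baire set `A ⊆ X` is therefore `p ⁻¹' B` with `B ⊇ A` Baire, so the
subspace measure is the pushforward of `μ` along `p`. Its Radon extension is given by the
Riesz–Markov–Kakutani theorem, and the regularity of that extension passes to the Baire measure.
-/

/-- The Baire σ-algebra of `X`: the smallest one making every continuous real-valued function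
measurable. It is the Baire analogue of `borel X`. -/
abbrev baire (X : Type*) [TopologicalSpace X] : MeasurableSpace X :=
  ⨆ f : C(X, ℝ), MeasurableSpace.comap f inferInstance

section BaireSigmaAlgebra

variable {X : Type*} [TopologicalSpace X]

theorem measurable_baire_continuousMap (f : C(X, ℝ)) : Measurable[baire X] f :=
  Measurable.of_comap_le (le_iSup (fun f : C(X, ℝ) ↦ MeasurableSpace.comap f inferInstance) f)

theorem baire_le [MeasurableSpace X] [OpensMeasurableSpace X] :
    baire X ≤ ‹MeasurableSpace X› :=
  iSup_le fun f ↦ f.continuous.measurable.comap_le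

theorem baire_eq_generateFrom_setOf_pos :
    baire X = MeasurableSpace.generateFrom {A | ∃ f : C(X, ℝ), A = {x | 0 < f x}} := by
  apply le_antisymm
  · refine iSup_le fun f ↦ ?_
    rw [BorelSpace.measurable_eq (α := ℝ), borel_eq_generateFrom_Ioi,
      MeasurableSpace.comap_generateFrom]
    refine MeasurableSpace.generateFrom_mono ?_
    rintro _ ⟨_, ⟨a, rfl⟩, rfl⟩
    exact ⟨f - ContinuousMap.const X a, by ext; simp⟩
  · refine MeasurableSpace.generateFrom_le ?_
    rintro _ ⟨f, rfl⟩
    exact measurable_baire_continuousMap f measurableSet_Ioi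

theorem comap_baire_eq_generateFrom_setOf_pos {M : Type*} (p : M → X) :
    (baire X).comap p =
      MeasurableSpace.generateFrom {A | ∃ f : C(X, ℝ), A = {m | 0 < f (p m)}} := by
  rw [baire_eq_generateFrom_setOf_pos, MeasurableSpace.comap_generateFrom]
  congr 1
  ext A
  simp [eq_comm]

theorem isPiSystem_setOf_pos : IsPiSystem {A | ∃ f : C(X, ℝ), A = {x | 0 < f x}} := by
  rintro _ ⟨f, rfl⟩ _ ⟨g, rfl⟩ -
  exact ⟨f ⊓ g, by ext; simp⟩

end BaireSigmaAlgebra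

section BaireMeasure

variable {X : Type*} [TopologicalSpace X]

theorem map_eq_map_of_forall_integral_eq [MeasurableSpace X]
    {Y : Type*} [TopologicalSpace Y] [HasOuterApproxClosed Y] [MeasurableSpace Y] [BorelSpace Y]
    {ν₁ ν₂ : Measure X} [IsFiniteMeasure ν₁] [IsFiniteMeasure ν₂]
    (h : ∀ f : X →ᵇ ℝ, ∫ x, f x ∂ν₁ = ∫ x, f x ∂ν₂) {f : C(X, Y)} (hf : Measurable f) :
    ν₁.map f = ν₂.map f := by
  refine ext_of_forall_integral_eq_of_IsFiniteMeasure fun g ↦ ?_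
  rw [integral_map hf.aemeasurable g.continuous.aestronglyMeasurable,
    integral_map hf.aemeasurable g.continuous.aestronglyMeasurable]
  exact h (g.compContinuous f)

theorem baire_ext_of_forall_integral_eq {ν₁ ν₂ : Measure[baire X] X}
    [IsFiniteMeasure ν₁] [IsFiniteMeasure ν₂]
    (h : ∀ f : X →ᵇ ℝ, ∫ x, f x ∂ν₁ = ∫ x, f x ∂ν₂) : ν₁ = ν₂ := by
  let := baire X
  have measure_preimage_eq (f : C(X, ℝ)) {s : Set ℝ} (hs : MeasurableSet s) :
      ν₁ (f ⁻¹' s) = ν₂ (f ⁻¹' s) := by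
    have hf : Measurable f := measurable_baire_continuousMap f
    rw [← Measure.map_apply hf hs, map_eq_map_of_forall_integral_eq h hf, Measure.map_apply hf hs]
  refine ext_of_generate_finite _ baire_eq_generateFrom_setOf_pos isPiSystem_setOf_pos ?_
    (measure_preimage_eq 0 .univ)
  rintro _ ⟨f, rfl⟩
  exact measure_preimage_eq f measurableSet_Ioi

theorem integral_trim_baire [MeasurableSpace X] [OpensMeasurableSpace X] (ρ : Measure X)
    (f : C(X, ℝ)) : ∫ x, f x ∂(ρ.trim baire_le) = ∫ x, f x ∂ρ :=
  (integral_trim baire_le (measurable_baire_continuousMap f).stronglyMeasurable).symm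

theorem integral_map_baire {M : Type*} [MeasurableSpace M] (μ : Measure M) {p : M → X}
    (hp : Measurable[_, baire X] p) (f : C(X, ℝ)) :
    ∫ x, f x ∂(@Measure.map M X _ (baire X) p μ) = ∫ m, f (p m) ∂μ :=
  let := baire X
  integral_map hp.aemeasurable (measurable_baire_continuousMap f).aestronglyMeasurable

theorem innerRegular_trim {m m0 : MeasurableSpace X} (hm : m ≤ m0) (ρ : Measure[m0] X)
    [ρ.InnerRegular] : @Measure.InnerRegular X m _ (ρ.trim hm) := by
  refine @Measure.InnerRegular.mk X m _ _ fun A hA r hr ↦ ?_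
  rw [trim_measurableSet_eq hm hA] at hr
  obtain ⟨K, hKA, hK, hrK⟩ := (hm A hA).exists_lt_isCompact hr
  exact ⟨K, hKA, hK, hrK.trans_le (le_trim hm)⟩

variable [CompactSpace X]

theorem integrable_baire (ν : Measure[baire X] X) [IsFiniteMeasure ν] (f : C(X, ℝ)) :
    Integrable f ν :=
  .of_bound (measurable_baire_continuousMap f).aestronglyMeasurable ‖f‖
    (ae_of_all _ f.norm_coe_le_norm)

variable [T2Space X]

theorem exists_regular_forall_integral_eq [MeasurableSpace X] [BorelSpace X]
    (Λ : C(X, ℝ) →ₚ[ℝ] ℝ) :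
    ∃ ρ : Measure X, ρ.Regular ∧ ∀ f : C(X, ℝ), ∫ x, f x ∂ρ = Λ f := by
  let Λc : CompactlySupportedContinuousMap X ℝ →ₚ[ℝ] ℝ := .mk₀
    { toFun := fun f ↦ Λ f.toContinuousMap
      map_add' := fun f g ↦ map_add Λ f.toContinuousMap g.toContinuousMap
      map_smul' := fun r f ↦ map_smul Λ r f.toContinuousMap }
    fun f hf ↦ Λ.map_nonneg (x := f.toContinuousMap) hf
  exact ⟨RealRMK.rieszMeasure Λc, inferInstance, fun f ↦
    RealRMK.integral_rieszMeasure Λc (CompactlySupportedContinuousMap.continuousMapEquiv f)⟩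

theorem exists_regular_trim_eq [MeasurableSpace X] [BorelSpace X]
    (ν : Measure[baire X] X) [IsFiniteMeasure ν] :
    ∃ ρ : Measure X, ρ.Regular ∧ ρ.trim baire_le = ν := by
  obtain ⟨ρ, hρ, hρν⟩ := exists_regular_forall_integral_eq (X := X) <| .mk₀
    { toFun := fun f ↦ ∫ x, f x ∂ν
      map_add' := fun f g ↦ integral_add (integrable_baire ν f) (integrable_baire ν g)
      map_smul' := fun r f ↦ integral_const_mul r f }
    fun f hf ↦ integral_nonneg hf
  refine ⟨ρ, hρ, baire_ext_of_forall_integral_eq fun f ↦ ?_⟩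
  exact (integral_trim_baire ρ f.toContinuousMap).trans (hρν f.toContinuousMap)

theorem exists_regular_probability_forall_integral_eq [MeasurableSpace X] [BorelSpace X]
    (ν : Measure[baire X] X) [IsProbabilityMeasure ν] :
    ∃ ρ : Measure X, IsProbabilityMeasure ρ ∧ ρ.Regular ∧
      ∀ f : C(X, ℝ), ∫ x, f x ∂ρ = ∫ x, f x ∂ν := by
  obtain ⟨ρ, hρ, rfl⟩ := exists_regular_trim_eq ν
  refine ⟨ρ, ⟨?_⟩, hρ, fun f ↦ (integral_trim_baire ρ f).symm⟩
  rw [← trim_measurableSet_eq baire_le .univ, measure_univ]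

theorem innerRegular_baire (ν : Measure[baire X] X) [IsFiniteMeasure ν] :
    @Measure.InnerRegular X (baire X) _ ν := by
  borelize X
  obtain ⟨ρ, hρ, rfl⟩ := exists_regular_trim_eq ν
  exact innerRegular_trim baire_le ρ

end BaireMeasure

theorem exists_leftInverse_forall_apply_eq {M X 𝕜 : Type*} [RCLike 𝕜]
    [TopologicalSpace X] [CompactSpace X] [T2Space X] (R : C(X, 𝕜) →ₐ[𝕜] (M → 𝕜)) (ι : X → M)
    (hR : ∀ f x, R f (ι x) = f x) :
    ∃ p : M → X, Function.LeftInverse p ι ∧ ∀ f m, R f m = f (p m) := by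
  let character (m : M) : WeakDual.characterSpace 𝕜 C(X, 𝕜) :=
    WeakDual.CharacterSpace.equivAlgHom.symm ((Pi.evalAlgHom 𝕜 (fun _ ↦ 𝕜) m).comp R)
  have eval_bijective := WeakDual.CharacterSpace.continuousMapEval_bijective X 𝕜
  choose p hp using fun m ↦ eval_bijective.surjective (character m)
  have hRp (f : C(X, 𝕜)) (m : M) : R f m = f (p m) := (DFunLike.congr_fun (hp m) f).symm
  refine ⟨p, fun x ↦ eval_bijective.injective (DFunLike.ext _ _ fun f ↦ ?_), hRp⟩
  exact (hRp f (ι x)).symm.trans (hR f x)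

theorem map_apply_eq_measure_image {M X : Type*} {mM : MeasurableSpace M}
    {mX : MeasurableSpace X} (μ : Measure M) {p : M → X} {ι : X → M}
    (hM : mM = mX.comap p) (hpι : Function.LeftInverse p ι) {A : Set X} (hA : MeasurableSet A) :
    μ.map p A = μ (ι '' A) := by
  have hp : Measurable p := .of_comap_le hM.ge
  rw [Measure.map_apply hp hA]
  apply le_antisymm
  · obtain ⟨B, -, hB⟩ : MeasurableSet[mX.comap p] (toMeasurable μ (ι '' A)) :=
      hM ▸ measurableSet_toMeasurable μ _
    have hAB : A ⊆ B := fun x hx ↦ by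
      have : ι x ∈ p ⁻¹' B := hB ▸ subset_toMeasurable μ _ (Set.mem_image_of_mem ι hx)
      rwa [Set.mem_preimage, hpι x] at this
    calc μ (p ⁻¹' A) ≤ μ (p ⁻¹' B) := measure_mono (Set.preimage_mono hAB)
      _ = μ (ι '' A) := by rw [hB, measure_toMeasurable]
  · refine measure_mono (Set.image_subset_iff.2 fun x hx ↦ ?_)
    rwa [Set.mem_preimage, Set.mem_preimage, hpι x]

/-- Proposition 3.8: if `X` is a compact Hausdorff space sitting inside a probability
measure space `M` (via `ι`) whose σ-algebra is generated by the sets `{R f > 0}`, and the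
`R f` form a representation of `C(X)` by bounded measurable functions, then `X` has full
outer measure, the subspace measure is a (inner regular) Baire probability measure
integrating `f` to `∫ R f dμ`, and there is a Radon probability measure on `X` with the
same integrals. -/
theorem full_outer_measure_and_radon_extension
    {M : Type*} [m0 : MeasurableSpace M] (μ : Measure M) [IsProbabilityMeasure μ]
    {X : Type*} [TopologicalSpace X] [CompactSpace X] [T2Space X]
    (ι : X → M) (hι : Function.Injective ι)
    (R : C(X, ℝ) → M → ℝ)
    (hmeas : ∀ f, Measurable (R f))
    (hbd : ∀ f, ∃ C, ∀ m, |R f m| ≤ C)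
    (hrestrict : ∀ f x, R f (ι x) = f x)
    (hone : R 1 = fun _ => 1)
    (hadd : ∀ f g, R (f + g) = R f + R g)
    (hsmul : ∀ (r : ℝ) (f), R (r • f) = r • R f)
    (hmul : ∀ f g, R (f * g) = R f * R g)
    (hmax : ∀ f g, R (f ⊔ g) = fun m => max (R f m) (R g m))
    (hgen : m0 = MeasurableSpace.generateFrom {A | ∃ f : C(X, ℝ), A = {m | 0 < R f m}}) :
    μ (Set.range ι) = 1 ∧
    (letI : MeasurableSpace X := m0.comap ι
      ∃ ν : Measure X,
        (∀ A : Set X, MeasurableSet A → ν A = μ (ι '' A)) ∧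
        IsProbabilityMeasure ν ∧ ν.InnerRegular ∧
        ∀ f : C(X, ℝ), ∫ x, f x ∂ν = ∫ m, R f m ∂μ) ∧
    (letI : MeasurableSpace X := borel X
      ∃ ρ : Measure X, IsProbabilityMeasure ρ ∧ ρ.Regular ∧
        ∀ f : C(X, ℝ), ∫ x, f x ∂ρ = ∫ m, R f m ∂μ) := by
  obtain ⟨p, hpι, hp⟩ : ∃ p : M → X, Function.LeftInverse p ι ∧ ∀ f m, R f m = f (p m) :=
    exists_leftInverse_forall_apply_eq (AlgHom.ofLinearMap ⟨⟨R, hadd⟩, hsmul⟩ hone hmul) ι hrestrict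
  have hM : m0 = (baire X).comap p :=
    hgen.trans (by simp only [hp, comap_baire_eq_generateFrom_setOf_pos])
  have hX : m0.comap ι = baire X := by
    rw [hM, MeasurableSpace.comap_comp, hpι.comp_eq_id, MeasurableSpace.comap_id]
  have hp_meas : Measurable[m0, baire X] p := .of_comap_le hM.ge
  let ν : Measure[baire X] X := @Measure.map M X m0 (baire X) p μ
  have hν : IsProbabilityMeasure ν :=
    let := baire X
    Measure.isProbabilityMeasure_map hp_meas.aemeasurable
  have hν_image (A : Set X) (hA : MeasurableSet[baire X] A) : ν A = μ (ι '' A) :=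
    map_apply_eq_measure_image μ hM hpι hA
  have hν_integral (f : C(X, ℝ)) : ∫ x, f x ∂ν = ∫ m, R f m ∂μ := by
    simpa only [hp] using integral_map_baire μ hp_meas f
  refine ⟨?_, ?_, ?_⟩
  · rw [← Set.image_univ, ← hν_image _ (@MeasurableSet.univ X (baire X)), hν.measure_univ]
  · rw [hX]
    exact ⟨ν, hν_image, hν, innerRegular_baire ν, hν_integral⟩
  · borelize X
    simpa only [hν_integral] using exists_regular_probability_forall_integral_eq ν
end
end

section
/- Let X be a compact Hausdorff space, X₀ ⊆ X a dense subset, and A ⊆ C(X) a norm-bounded family such that whenever (f_n) is a sequence in A and (x_m) a sequence in X₀ for which both iterated limits lim_n lim_m f_n(x_m) and lim_m lim_n f_n(x_m) exist, they are equal. Then every function ψ : X → ℝ lying in the closure of A in the product topology of ℝ^X is continuous, and moreover there exists a sequence (f_k) of elements of A converging to ψ pointwise on X. -/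
open BoundedContinuousFunction MeasureTheory Filter Topology

noncomputable section

/-!
If a pointwise cluster point `ψ` of `A` were discontinuous at `x` along `X₀`, then choosing
alternately functions `f n ∈ A` close to `ψ` at `x` and at the earlier points, and points
`y m ∈ X₀` at which the earlier functions are close to their values at `x` while `ψ (y m)` stays
away from `ψ x`, would make the two iterated limits of `f n (y m)` differ. Continuity on all of `X`
then follows by density.

By compactness of the powers `Xⁿ`, a continuous cluster point `ψ` of `A` is already a cluster point
of a countable `D ⊆ A`. The diagonal map `X → E^D` has a compact metrizable, hence separable, image,
so there is a countable `S ⊆ X` such that every point of `X` is indistinguishable by `D` from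
a point of `closure S`. The pointwise closure of `D` is compact and consists of continuous
functions, each determined by its restriction to `S`; it therefore embeds into the
first-countable space `E^S`, where closure points are limits of sequences.
-/

section FirstCountableImage

variable {Y Z : Type*} [TopologicalSpace Y] [TopologicalSpace Z]

theorem exists_seq_tendsto_of_injOn_closure [T2Space Z] [FirstCountableTopology Z] {M : Set Y}
    (hM : IsCompact (closure M)) {ρ : Y → Z} (hρ : Continuous ρ) (hinj : Set.InjOn ρ (closure M))
    {y : Y} (hy : y ∈ closure M) :
    ∃ u : ℕ → Y, (∀ n, u n ∈ M) ∧ Tendsto u atTop (𝓝 y) := by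
  have : CompactSpace (closure M) := isCompact_iff_compactSpace.mp hM
  have hemb : IsClosedEmbedding ((closure M).domRestrict ρ) :=
    (hρ.comp continuous_subtype_val).isClosedEmbedding hinj.injective
  have : FirstCountableTopology (closure M) := hemb.isInducing.firstCountableTopology
  have hy' : (⟨y, hy⟩ : closure M) ∈ closure (Subtype.val ⁻¹' M) := by
    rwa [closure_subtype, Subtype.image_preimage_coe, Set.inter_eq_right.mpr subset_closure]
  obtain ⟨u, huM, hu⟩ := mem_closure_iff_seq_limit.mp hy'
  exact ⟨fun n => u n, huM, (continuous_subtype_val.tendsto _).comp hu⟩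

theorem exists_countable_image_closure_eq_range [CompactSpace Y]
    [TopologicalSpace.MetrizableSpace Z] {π : Y → Z} (hπ : Continuous π) :
    ∃ S : Set Y, S.Countable ∧ π '' closure S = Set.range π := by
  obtain ⟨T, hT, hTcount, hTdense⟩ :=
    (isCompact_range hπ).isSeparable.exists_countable_dense_subset
  obtain ⟨S, rfl, hinj⟩ := Set.exists_image_eq_injOn_of_subset_range hT
  refine ⟨S, Set.countable_of_injective_of_countable_image hinj hTcount,
    (Set.image_subset_range _ _).antisymm (hTdense.trans ?_)⟩
  exact closure_minimal (Set.image_mono subset_closure)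
    (isClosed_closure.isCompact.image hπ).isClosed

end FirstCountableImage

section PointwiseClosure

variable {X E : Type*}

theorem mem_closure_iff_forall_finite_exists_dist_lt [PseudoMetricSpace E] {F : Set (X → E)}
    {ψ : X → E} :
    ψ ∈ closure F ↔
      ∀ T : Set X, T.Finite → ∀ δ > 0, ∃ f ∈ F, ∀ t ∈ T, dist (f t) (ψ t) < δ := by
  have hbasis := hasBasis_pi_same_index (fun t => Metric.nhds_basis_ball (x := ψ t))
    fun T r hT hr => by
      have hsmall : ∀ᶠ δ in 𝓝[>] (0 : ℝ), ∀ t ∈ T, δ < r t :=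
        (eventually_all_finite hT).mpr fun t ht =>
          (eventually_lt_nhds (hr t ht)).filter_mono nhdsWithin_le_nhds
      obtain ⟨δ, hδr, hδ⟩ := (hsmall.and self_mem_nhdsWithin).exists
      exact ⟨δ, hδ, fun t ht => Metric.ball_subset_ball (hδr t ht).le⟩
  rw [← nhds_pi] at hbasis
  simp only [mem_closure_iff_nhds_basis hbasis, Prod.forall, and_imp, Set.mem_pi, Metric.mem_ball]
  exact forall_congr' fun T => forall_comm

theorem apply_eq_apply_of_mem_closure [TopologicalSpace E] [T2Space E] {F : Set (X → E)}
    {ψ : X → E} (hψ : ψ ∈ closure F) {x y : X} (hxy : ∀ f ∈ F, f x = f y) : ψ x = ψ y :=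
  closure_minimal hxy (isClosed_eq (continuous_apply x) (continuous_apply y)) hψ

theorem closure_subset_univ_pi [TopologicalSpace E] {F : Set (X → E)} {K : Set E}
    (hK : IsClosed K) (hFK : ∀ f ∈ F, ∀ x, f x ∈ K) :
    closure F ⊆ Set.univ.pi fun _ => K :=
  closure_minimal (fun f hf x _ => hFK f hf x) (isClosed_set_pi fun _ _ => hK)

end PointwiseClosure

section Grothendieck

variable {X E : Type*} [TopologicalSpace X]

/-- Grothendieck's double limit condition for a family `A` of continuous functions over a set `X₀`
of points: the iterated limits of `f n (x m)`, for `f n ∈ A` and `x m ∈ X₀`, agree whenever both of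
them exist. The inner limits are recorded by the sequences `L` and `K`. -/
def DoubleLimitCondition [TopologicalSpace E] (A : Set C(X, E)) (X₀ : Set X) : Prop :=
  ∀ (f : ℕ → C(X, E)) (x : ℕ → X), (∀ n, f n ∈ A) → (∀ m, x m ∈ X₀) →
    ∀ (L K : ℕ → E) (a b : E),
      (∀ n, Tendsto (fun m => f n (x m)) atTop (𝓝 (L n))) →
      Tendsto L atTop (𝓝 a) →
      (∀ m, Tendsto (fun n => f n (x m)) atTop (𝓝 (K m))) →
      Tendsto K atTop (𝓝 b) →
      a = b

theorem exists_mem_forall_finset_dist_lt [PseudoMetricSpace E] {B : Set X} {x : X}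
    (hx : x ∈ closure B) (S : Finset C(X, E)) {δ : ℝ} (hδ : 0 < δ) :
    ∃ y ∈ B, ∀ f ∈ S, dist (f y) (f x) < δ := by
  have hnear : ∀ᶠ y in 𝓝 x, ∀ f ∈ S, dist (f y) (f x) < δ :=
    (Finset.eventually_all S).mpr fun f _ =>
      Metric.tendsto_nhds.mp (f.continuous.tendsto x) δ hδ
  exact ((mem_closure_iff_frequently.mp hx).and_eventually hnear).exists

theorem exists_seq_iterated_limits [PseudoMetricSpace E] {A : Set C(X, E)} {ψ : X → E}
    (hψ : ψ ∈ closure (DFunLike.coe '' A)) {B : Set X} {x : X} (hx : x ∈ closure B) :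
    ∃ (f : ℕ → C(X, E)) (y : ℕ → X), (∀ n, f n ∈ A) ∧ (∀ m, y m ∈ B) ∧
      (∀ n, Tendsto (fun m => f n (y m)) atTop (𝓝 (f n x))) ∧
      Tendsto (fun n => f n x) atTop (𝓝 (ψ x)) ∧
      ∀ m, Tendsto (fun n => f n (y m)) atTop (𝓝 (ψ (y m))) := by
  classical
  -- The first component `k` of a triple `(k, f, y)` prescribes the accuracy `1 / (k + 1)`.
  obtain ⟨s, hs, hstep⟩ := exists_seq_of_forall_finset_exists
    (fun p : ℕ × C(X, E) × X => p.2.1 ∈ A ∧ p.2.2 ∈ B ∧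
      dist (p.2.1 x) (ψ x) < 1 / ((p.1 : ℝ) + 1))
    (fun p q => p.1 < q.1 ∧ dist (q.2.1 p.2.2) (ψ p.2.2) < 1 / ((q.1 : ℝ) + 1) ∧
      dist (p.2.1 q.2.2) (p.2.1 x) < 1 / ((q.1 : ℝ) + 1))
    fun S _ => by
      obtain ⟨k, hk⟩ : ∃ k, ∀ p ∈ S, p.1 < k :=
        ⟨S.sup Prod.fst + 1, fun p hp => Nat.lt_succ_of_le (Finset.le_sup (f := Prod.fst) hp)⟩
      have hpos : 0 < 1 / ((k : ℝ) + 1) := Nat.one_div_pos_of_nat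
      obtain ⟨_, ⟨f, hfA, rfl⟩, hf⟩ := mem_closure_iff_forall_finite_exists_dist_lt.mp hψ
        (insert x (S.image fun p => p.2.2)) ((Finset.finite_toSet _).insert x) _ hpos
      obtain ⟨y, hyB, hy⟩ := exists_mem_forall_finset_dist_lt hx (S.image fun p => p.2.1) hpos
      exact ⟨(k, f, y), ⟨hfA, hyB, hf x (Set.mem_insert _ _)⟩, fun p hp => ⟨hk p hp,
        hf _ (Set.mem_insert_of_mem _ (Finset.mem_image_of_mem _ hp)),
        hy _ (Finset.mem_image_of_mem _ hp)⟩⟩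
  have haccuracy : Tendsto (fun n => 1 / (((s n).1 : ℝ) + 1)) atTop (𝓝 0) :=
    tendsto_one_div_add_atTop_nhds_zero_nat.comp
      (strictMono_nat_of_lt_succ fun n => (hstep n _ n.lt_succ_self).1).tendsto_atTop
  have tendsto_of_dist_lt {u : ℕ → E} {l : E}
      (hu : ∀ᶠ n in atTop, dist (u n) l < 1 / (((s n).1 : ℝ) + 1)) : Tendsto u atTop (𝓝 l) :=
    tendsto_iff_dist_tendsto_zero.mpr <|
      squeeze_zero' (.of_forall fun _ => dist_nonneg) (hu.mono fun _ => le_of_lt) haccuracy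
  exact ⟨fun n => (s n).2.1, fun m => (s m).2.2, fun n => (hs n).1, fun m => (hs m).2.1,
    fun n => tendsto_of_dist_lt <| (eventually_gt_atTop n).mono fun m hm => (hstep n m hm).2.2,
    tendsto_of_dist_lt <| .of_forall fun n => (hs n).2.2,
    fun m => tendsto_of_dist_lt <| (eventually_gt_atTop m).mono fun n hn => (hstep m n hn).2.1⟩

variable [MetricSpace E] {A : Set C(X, E)} {X₀ : Set X} {K : Set E} {ψ : X → E}

theorem DoubleLimitCondition.apply_mem_closure_image (hA : DoubleLimitCondition A X₀)
    (hK : IsCompact K) (hAK : ∀ f ∈ A, ∀ x, f x ∈ K) (hψ : ψ ∈ closure (DFunLike.coe '' A))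
    {B : Set X} (hB : B ⊆ X₀) {x : X} (hx : x ∈ closure B) : ψ x ∈ closure (ψ '' B) := by
  obtain ⟨f, y, hfA, hyB, hf, hfx, hfy⟩ := exists_seq_iterated_limits hψ hx
  have hψK : ∀ z, ψ z ∈ K := fun z =>
    closure_subset_univ_pi hK.isClosed (Set.forall_mem_image.mpr hAK) hψ z (Set.mem_univ z)
  obtain ⟨b, -, σ, hσ, hb⟩ := hK.tendsto_subseq fun m => hψK (y m)
  have hψx : ψ x = b := hA f (y ∘ σ) hfA (fun m => hB (hyB (σ m))) (fun n => f n x)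
    (fun m => ψ (y (σ m))) _ _ (fun n => (hf n).comp hσ.tendsto_atTop) hfx
    (fun m => hfy (σ m)) hb
  exact hψx ▸ mem_closure_of_tendsto hb (.of_forall fun m => Set.mem_image_of_mem ψ (hyB (σ m)))

theorem DoubleLimitCondition.continuousWithinAt (hA : DoubleLimitCondition A X₀)
    (hK : IsCompact K) (hAK : ∀ f ∈ A, ∀ x, f x ∈ K) (hψ : ψ ∈ closure (DFunLike.coe '' A))
    (x : X) : ContinuousWithinAt ψ X₀ x := by
  by_contra hdisc
  obtain ⟨U, hU, hfreq⟩ := not_tendsto_iff_exists_frequently_notMem.mp hdisc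
  have hx : x ∈ closure {y | ψ y ∉ U ∧ y ∈ X₀} :=
    mem_closure_iff_frequently.mpr (frequently_nhdsWithin_iff.mp hfreq)
  obtain ⟨_, hyU, y, hy, rfl⟩ := mem_closure_iff_nhds.mp
    (hA.apply_mem_closure_image hK hAK hψ (fun _ hy => hy.2) hx) U hU
  exact hy.1 hyU

theorem DoubleLimitCondition.continuous (hA : DoubleLimitCondition A X₀) (hX₀ : Dense X₀)
    (hK : IsCompact K) (hAK : ∀ f ∈ A, ∀ x, f x ∈ K) (hψ : ψ ∈ closure (DFunLike.coe '' A)) :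
    Continuous ψ := by
  have hwithin := hA.continuousWithinAt hK hAK hψ
  have hextend : extendFrom X₀ ψ = ψ := funext fun x => extendFrom_eq (hX₀ x) (hwithin x)
  exact hextend ▸ continuous_extendFrom hX₀ fun x => ⟨ψ x, hwithin x⟩

end Grothendieck

section CountableSubfamily

variable {X E : Type*} [TopologicalSpace X] [CompactSpace X]

theorem exists_finite_subset_forall_exists_dist_lt [PseudoMetricSpace E] {A : Set C(X, E)}
    {ψ : X → E} (hψc : Continuous ψ) (hψ : ψ ∈ closure (DFunLike.coe '' A))
    (ι : Type*) [Finite ι] {δ : ℝ} (hδ : 0 < δ) :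
    ∃ F ⊆ A, F.Finite ∧ ∀ x : ι → X, ∃ f ∈ F, ∀ i, dist (f (x i)) (ψ (x i)) < δ := by
  obtain ⟨F, hFA, hFfin, hcover⟩ := (isCompact_univ (X := ι → X)).elim_finite_subcover_image
    (b := A) (c := fun f => ⋂ i, {x | dist (f (x i)) (ψ (x i)) < δ})
    (fun f _ => isOpen_iInter_of_finite fun i => isOpen_lt (by fun_prop) continuous_const)
    (fun x _ => by
      obtain ⟨_, ⟨f, hfA, rfl⟩, hf⟩ := mem_closure_iff_forall_finite_exists_dist_lt.mp hψ
        (Set.range x) (Set.finite_range x) δ hδ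
      exact Set.mem_biUnion hfA (Set.mem_iInter.mpr fun i => hf _ (Set.mem_range_self i)))
  refine ⟨F, hFA, hFfin, fun x => ?_⟩
  obtain ⟨f, hfF, hf⟩ := Set.mem_iUnion₂.mp (hcover (Set.mem_univ x))
  exact ⟨f, hfF, fun i => Set.mem_iInter.mp hf i⟩

theorem exists_countable_subset_mem_closure [PseudoMetricSpace E] {A : Set C(X, E)}
    {ψ : X → E} (hψc : Continuous ψ) (hψ : ψ ∈ closure (DFunLike.coe '' A)) :
    ∃ D ⊆ A, D.Countable ∧ ψ ∈ closure (DFunLike.coe '' D) := by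
  choose F hFA hFfin hF using fun n k : ℕ =>
    exists_finite_subset_forall_exists_dist_lt hψc hψ (Fin n) (Nat.one_div_pos_of_nat (n := k))
  refine ⟨⋃ n, ⋃ k, F n k, Set.iUnion₂_subset hFA,
    Set.countable_iUnion fun n => Set.countable_iUnion fun k => (hFfin n k).countable,
    mem_closure_iff_forall_finite_exists_dist_lt.mpr fun T hT δ hδ => ?_⟩
  obtain ⟨k, hk⟩ := exists_nat_one_div_lt hδ
  obtain ⟨n, x, -, rfl⟩ := hT.fin_param
  obtain ⟨f, hfF, hf⟩ := hF n k x
  exact ⟨f, Set.mem_image_of_mem _ (Set.mem_iUnion₂.mpr ⟨n, k, hfF⟩),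
    Set.forall_mem_range.mpr fun i => (hf i).trans hk⟩

theorem exists_countable_forall_eqOn_imp_eq [MetricSpace E] {D : Set C(X, E)}
    (hD : D.Countable) :
    ∃ S : Set X, S.Countable ∧ ∀ φ ∈ closure (DFunLike.coe '' D),
      ∀ ψ ∈ closure (DFunLike.coe '' D), Continuous φ → Continuous ψ → Set.EqOn φ ψ S → φ = ψ := by
  have := hD.to_subtype
  obtain ⟨S, hS, hSrange⟩ := exists_countable_image_closure_eq_range
    (π := fun (x : X) (f : D) => f.1 x) (by fun_prop)
  refine ⟨S, hS, fun φ hφ ψ hψ hφc hψc hφψ => funext fun x => ?_⟩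
  obtain ⟨y, hyS, hyx⟩ := hSrange.ge (Set.mem_range_self x)
  have hD_eq : ∀ f ∈ (DFunLike.coe '' D : Set (X → E)), f y = f x :=
    Set.forall_mem_image.mpr fun f hf => congrFun hyx ⟨f, hf⟩
  calc
    φ x = φ y := (apply_eq_apply_of_mem_closure hφ hD_eq).symm
    _ = ψ y := hφψ.closure hφc hψc hyS
    _ = ψ x := apply_eq_apply_of_mem_closure hψ hD_eq

theorem exists_seq_tendsto_of_mem_closure_of_countable [MetricSpace E] {D : Set C(X, E)}
    (hD : D.Countable)
    (hcompact : IsCompact (closure (DFunLike.coe '' D : Set (X → E))))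
    (hcont : ∀ φ ∈ closure (DFunLike.coe '' D : Set (X → E)), Continuous φ)
    {ψ : X → E} (hψ : ψ ∈ closure (DFunLike.coe '' D)) :
    ∃ g : ℕ → C(X, E), (∀ k, g k ∈ D) ∧ ∀ x, Tendsto (fun k => g k x) atTop (𝓝 (ψ x)) := by
  obtain ⟨S, hS, hdet⟩ := exists_countable_forall_eqOn_imp_eq hD
  have := hS.to_subtype
  have hinj : Set.InjOn S.domRestrict (closure (DFunLike.coe '' D : Set (X → E))) :=
    fun φ hφ χ hχ hφχ => hdet φ hφ χ hχ (hcont φ hφ) (hcont χ hχ)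
      (Set.domRestrict_eq_domRestrict_iff.mp hφχ)
  obtain ⟨u, huD, hu⟩ :=
    exists_seq_tendsto_of_injOn_closure hcompact (Pi.continuous_domRestrict S) hinj hψ
  choose g hgD hgu using huD
  obtain rfl : (fun k => ⇑(g k)) = u := funext hgu
  exact ⟨g, hgD, tendsto_pi_nhds.mp hu⟩

end CountableSubfamily

theorem cluster_point_continuous_and_sequential_limit_general
    {X E : Type*} [TopologicalSpace X] [CompactSpace X] [MetricSpace E]
    {X₀ : Set X} (hX₀ : Dense X₀) {A : Set C(X, E)}
    {K : Set E} (hK : IsCompact K) (hAK : ∀ f ∈ A, ∀ x, f x ∈ K)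
    (hA : DoubleLimitCondition A X₀) {ψ : X → E} (hψ : ψ ∈ closure (DFunLike.coe '' A)) :
    Continuous ψ ∧ ∃ g : ℕ → C(X, E), (∀ k, g k ∈ A) ∧
      ∀ x, Tendsto (fun k => g k x) atTop (𝓝 (ψ x)) := by
  have hcont : ∀ φ ∈ closure (DFunLike.coe '' A : Set (X → E)), Continuous φ :=
    fun _ => hA.continuous hX₀ hK hAK
  obtain ⟨D, hDA, hD, hψD⟩ := exists_countable_subset_mem_closure (hcont ψ hψ) hψ
  have hDA_closure : closure (DFunLike.coe '' D : Set (X → E)) ⊆ closure (DFunLike.coe '' A) :=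
    closure_mono (Set.image_mono hDA)
  have hcompact : IsCompact (closure (DFunLike.coe '' D : Set (X → E))) :=
    (isCompact_univ_pi fun _ => hK).of_isClosed_subset isClosed_closure <|
      hDA_closure.trans (closure_subset_univ_pi hK.isClosed (Set.forall_mem_image.mpr hAK))
  obtain ⟨g, hgD, hg⟩ := exists_seq_tendsto_of_mem_closure_of_countable hD hcompact
    (fun φ hφ => hcont φ (hDA_closure hφ)) hψD
  exact ⟨hcont ψ hψ, g, fun k => hDA (hgD k), hg⟩

/-- Grothendieck's criterion applied to definability of types (Theorem 5.12): if
`A ⊆ C(X)` is norm-bounded and satisfies the double limit condition over a dense subset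
`X₀`, then every pointwise cluster point of `A` is continuous and is the pointwise limit of
an actual sequence from `A`. -/
theorem cluster_point_continuous_and_sequential_limit
    {X : Type*} [TopologicalSpace X] [CompactSpace X] [T2Space X]
    (X₀ : Set X) (hX₀ : Dense X₀) (A : Set C(X, ℝ))
    (hbdd : ∃ C, ∀ f ∈ A, ‖f‖ ≤ C)
    (hdl : ∀ (f : ℕ → C(X, ℝ)) (x : ℕ → X), (∀ n, f n ∈ A) → (∀ m, x m ∈ X₀) →
      ∀ (L K : ℕ → ℝ) (a b : ℝ),
        (∀ n, Tendsto (fun m => f n (x m)) atTop (nhds (L n))) →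
        Tendsto L atTop (nhds a) →
        (∀ m, Tendsto (fun n => f n (x m)) atTop (nhds (K m))) →
        Tendsto K atTop (nhds b) →
        a = b)
    (ψ : X → ℝ)
    (hψ : ψ ∈ closure ((fun f : C(X, ℝ) => (f : X → ℝ)) '' A)) :
    Continuous ψ ∧ ∃ g : ℕ → C(X, ℝ), (∀ k, g k ∈ A) ∧
      ∀ x, Tendsto (fun k => g k x) atTop (nhds (ψ x)) := by
  obtain ⟨C, hC⟩ := hbdd
  exact cluster_point_continuous_and_sequential_limit_general hX₀ (isCompact_closedBall 0 C)
    (fun f hf x => mem_closedBall_zero_iff.mpr ((f.norm_coe_le_norm x).trans (hC f hf))) hdl hψ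
end
end
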